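/- Let J_≥ = {f ∈ C^∞(ℝ) | f(x) = 0 for all x ≥ 0} and J_≤ = {f ∈ C^∞(ℝ) | f(x) = 0 for all x ≤ 0}. The map from the tensor product of C^∞(ℝ)-modules (C^∞(ℝ)/J_≥) ⊗_{C^∞(ℝ)} (C^∞(ℝ)/J_≤) to the space ℝ^ℕ of all real sequences, sending [f] ⊗ [g] to the sequence n ↦ (n-th iterated derivative of f·g at 0), is a well-defined ℝ-linear isomorphism. In particular this tensor product is an infinite-dimensional real vector space. -/

import Mathlib

open scoped Manifold TensorProduct

noncomputable section

/-- The ring `C^∞(ℝ)` of smooth real-valued functions on `ℝ`. -/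
abbrev SmoothR : Type := C^(⊤ : ℕ∞)⟮modelWithCornersSelf ℝ ℝ, ℝ; ℝ⟯

/-- The ideal `J_≥` of smooth functions vanishing at all `x ≥ 0`. -/
def Jge : Ideal SmoothR where
  carrier := {f : SmoothR | ∀ x : ℝ, 0 ≤ x → f x = 0}
  add_mem' := by intro a b ha hb x hx; simp [ha x hx, hb x hx]
  zero_mem' := by intro x hx; simp
  smul_mem' := by intro c f hf x hx; simp [smul_eq_mul, hf x hx]

/-- The ideal `J_≤` of smooth functions vanishing at all `x ≤ 0`. -/
def Jle : Ideal SmoothR where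
  carrier := {f : SmoothR | ∀ x : ℝ, x ≤ 0 → f x = 0}
  add_mem' := by intro a b ha hb x hx; simp [ha x hx, hb x hx]
  zero_mem' := by intro x hx; simp
  smul_mem' := by intro c f hf x hx; simp [smul_eq_mul, hf x hx]

/-!
For ideals `I` and `J` of a commutative ring `R`, multiplication identifies `R/I ⊗ R/J` with
`R/(I + J)`, so the claim is that `f ↦ (f⁽ⁿ⁾(0))ₙ` is onto with kernel `J_≥ + J_≤`. Surjectivity is
Borel's lemma. A function in either ideal vanishes on a half-line ending at `0`, so by continuity
all its derivatives vanish at `0`. Conversely, if all derivatives of `f` vanish at `0`, then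
`1_{[0, ∞)} f` is smooth, and `f = (f - 1_{[0, ∞)} f) + 1_{[0, ∞)} f` lies in `J_≥ + J_≤`.
-/

section Analysis

open Filter Set
open scoped ContDiff Topology

section OneVariable

variable {𝕜 F : Type*} [NontriviallyNormedField 𝕜] [NormedAddCommGroup F] [NormedSpace 𝕜 F]
  {f f' : 𝕜 → F} {s : Set 𝕜} {x : 𝕜}

theorem hasDerivAt_indicator (hf : HasDerivAt f (f' x) x)
    (hx : x ∈ frontier s → f x = 0 ∧ f' x = 0) :
    HasDerivAt (s.indicator f) (s.indicator f' x) x := by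
  by_cases hxs : x ∈ frontier s
  · obtain ⟨hfx, hf'x⟩ := hx hxs
    have hf_small : f =o[𝓝 x] fun y => y - x := by
      simpa only [hfx, hf'x, sub_zero, smul_zero] using hf.isLittleO
    have hind_small : s.indicator f =o[𝓝 x] fun y => y - x :=
      (Asymptotics.isBigO_of_le _ fun y => norm_indicator_le_norm_self f y).trans_isLittleO hf_small
    refine .of_isLittleO ?_
    simpa only [indicator_apply_eq_zero.2 fun _ => hfx, indicator_apply_eq_zero.2 fun _ => hf'x,
      sub_zero, smul_zero] using hind_small
  · rw [← mem_compl_iff, compl_frontier_eq_union_interior] at hxs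
    rcases hxs with hxs | hxs
    · rw [indicator_of_mem (interior_subset hxs)]
      exact hf.congr_of_eventuallyEq <|
        (eqOn_indicator (f := f)).eventuallyEq_of_mem (mem_interior_iff_mem_nhds.1 hxs)
    · rw [indicator_of_notMem (interior_subset hxs)]
      exact (hasDerivAt_const x 0).congr_of_eventuallyEq <|
        (eqOn_indicator' (f := f)).eventuallyEq_of_mem (mem_interior_iff_mem_nhds.1 hxs)

theorem contDiff_indicator_nat {n : ℕ} (hf : ContDiff 𝕜 n f)
    (hflat : ∀ k ≤ n, ∀ x ∈ frontier s, iteratedDeriv k f x = 0) :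
    ContDiff 𝕜 n (s.indicator f) := by
  induction n generalizing f with
  | zero =>
    simp only [Nat.le_zero, forall_eq, iteratedDeriv_zero] at hflat
    exact contDiff_zero.2 (hf.continuous.indicator hflat)
  | succ n ih =>
    have hflat_deriv : ∀ k ≤ n, ∀ x ∈ frontier s, iteratedDeriv k (deriv f) x = 0 :=
      fun k hk x hx => iteratedDeriv_succ' (f := f) ▸ hflat (k + 1) (by lia) x hx
    have hderiv (x : 𝕜) : HasDerivAt (s.indicator f) (s.indicator (deriv f) x) x :=
      hasDerivAt_indicator (hf.differentiable (by simp) x).hasDerivAt fun hx =>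
        ⟨by simpa using hflat 0 (by lia) x hx, by simpa using hflat 1 (by lia) x hx⟩
    push_cast at hf ⊢
    refine contDiff_succ_iff_deriv.2 ⟨fun x => (hderiv x).differentiableAt, by simp, ?_⟩
    rw [funext fun x => (hderiv x).deriv]
    exact ih (contDiff_succ_iff_deriv.1 hf).2.2 hflat_deriv

theorem contDiff_indicator {n : ℕ∞} (hf : ContDiff 𝕜 n f)
    (hflat : ∀ k : ℕ, k ≤ n → ∀ x ∈ frontier s, iteratedDeriv k f x = 0) :
    ContDiff 𝕜 n (s.indicator f) :=
  contDiff_iff_forall_nat_le.2 fun _ hm =>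
    contDiff_indicator_nat (hf.of_le (mod_cast hm)) fun k hk =>
      hflat k ((Nat.cast_le.2 hk).trans hm)

theorem eqOn_iteratedDeriv_zero_closure_interior {n : ℕ}
    (hf : Continuous (iteratedDeriv n f)) (h : EqOn f 0 s) :
    EqOn (iteratedDeriv n f) 0 (closure (interior s)) := by
  have hint : EqOn (iteratedDeriv n f) 0 (interior s) := fun x hx => by
    simpa using (h.mono interior_subset).iteratedDeriv_of_isOpen isOpen_interior n hx
  exact hint.closure hf continuous_zero

theorem exists_norm_iteratedDeriv_le_of_hasCompactSupport {k : ℕ}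
    (hf : ContDiff 𝕜 k f) (hsupp : HasCompactSupport f) :
    ∃ C, ∀ x, ‖iteratedDeriv k f x‖ ≤ C := by
  simp only [← norm_iteratedFDeriv_eq_norm_iteratedDeriv]
  exact (hsupp.iteratedFDeriv k).exists_bound_of_continuous (hf.continuous_iteratedFDeriv le_rfl)

end OneVariable

section Series

variable {ι 𝕜 F : Type*} [NontriviallyNormedField 𝕜] [IsRCLikeNormedField 𝕜]
  [NormedAddCommGroup F] [NormedSpace 𝕜 F] [CompleteSpace F]

theorem iteratedDeriv_tsum_apply {f : ι → 𝕜 → F} {v : ℕ → ι → ℝ} {N : ℕ∞}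
    (hf : ∀ i, ContDiff 𝕜 N (f i)) (hv : ∀ k : ℕ, k ≤ N → Summable (v k))
    (hfv : ∀ (k : ℕ) i x, k ≤ N → ‖iteratedDeriv k (f i) x‖ ≤ v k i) {k : ℕ} (hk : k ≤ N) (x : 𝕜) :
    iteratedDeriv k (fun y => ∑' i, f i y) x = ∑' i, iteratedDeriv k (f i) x := by
  simp only [← norm_iteratedFDeriv_eq_norm_iteratedDeriv] at hfv
  have hsum : Summable fun i => iteratedFDeriv 𝕜 k (f i) x :=
    .of_norm_bounded (hv k hk) fun i => hfv k i x hk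
  simp only [iteratedDeriv_eq_iteratedFDeriv, iteratedFDeriv_tsum_apply hf hv hfv hk,
    ContinuousMultilinearMap.tsum_eval hsum]

end Series

section Borel

variable {F : Type*} [NormedAddCommGroup F] [NormedSpace ℝ F]

theorem exists_contDiff_hasCompactSupport_iteratedDeriv_eq_single (n : ℕ) (c : F) :
    ∃ f : ℝ → F, ContDiff ℝ ∞ f ∧ HasCompactSupport f ∧
      ∀ k, iteratedDeriv k f 0 = (Pi.single n c : ℕ → F) k := by
  let b : ContDiffBump (0 : ℝ) := default
  let v : F := (n.factorial : ℝ)⁻¹ • c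
  have hmonomial : (fun x : ℝ => (b x * x ^ n) • v) =ᶠ[𝓝 0] fun x => x ^ n • v := by
    filter_upwards [b.eventuallyEq_one] with x hx
    simp [hx]
  refine ⟨fun x => (b x * x ^ n) • v, (b.contDiff.mul (contDiff_id.pow n)).smul_const v,
    b.hasCompactSupport.mul_right.smul_right, fun k => ?_⟩
  rw [hmonomial.iteratedDeriv_eq, iteratedDeriv_smul_const (by fun_prop),
    iteratedDeriv_fun_pow_zero]
  rcases eq_or_ne k n with rfl | hkn
  · simp [v, smul_smul, Nat.factorial_ne_zero]
  · simp [hkn]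

theorem exists_contDiff_iteratedDeriv_eq_single_norm_le (n : ℕ) (c : F) {ε : ℝ} (hε : 0 < ε) :
    ∃ f : ℝ → F, ContDiff ℝ ∞ f ∧
      (∀ k, iteratedDeriv k f 0 = (Pi.single n c : ℕ → F) k) ∧
      (∀ k, ∃ C, ∀ x, ‖iteratedDeriv k f x‖ ≤ C) ∧ ∀ k < n, ∀ x, ‖iteratedDeriv k f x‖ ≤ ε := by
  obtain ⟨φ, hφ, hφ_supp, hφ_jet⟩ := exists_contDiff_hasCompactSupport_iteratedDeriv_eq_single n c
  choose C hC using fun k : ℕ =>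
    exists_norm_iteratedDeriv_le_of_hasCompactSupport (contDiff_infty.1 hφ k) hφ_supp
  -- Replacing `φ` by `x ↦ t⁻ⁿ φ (t x)` keeps its `n`-th derivative at `0` and scales the bounds on
  -- the derivatives of order `k < n` by `tᵏ⁻ⁿ ≤ t⁻¹`.
  obtain ⟨t, ht1, htC⟩ : ∃ t : ℝ, 1 ≤ t ∧ ∀ k ∈ Finset.range n, C k ≤ ε * t :=
    ((eventually_ge_atTop 1).and <| (Finset.range n).eventually_all.2 fun k _ =>
      (tendsto_id.const_mul_atTop hε).eventually_ge_atTop (C k)).exists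
  have ht0 : 0 < t := one_pos.trans_le ht1
  have hderiv (k : ℕ) (x : ℝ) : iteratedDeriv k (fun y => (t ^ n)⁻¹ • φ (t * y)) x =
      (t ^ n)⁻¹ • t ^ k • iteratedDeriv k φ (t * x) := by
    rw [iteratedDeriv_fun_const_smul_field,
      iteratedDeriv_comp_const_smul (contDiff_infty.1 hφ k)]
  have hnorm (k : ℕ) (x : ℝ) : ‖iteratedDeriv k (fun y => (t ^ n)⁻¹ • φ (t * y)) x‖ ≤
      (t ^ n)⁻¹ * (t ^ k * C k) := by
    rw [hderiv, norm_smul_of_nonneg (by positivity), norm_smul_of_nonneg (by positivity)]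
    gcongr
    exact hC k _
  refine ⟨fun y => (t ^ n)⁻¹ • φ (t * y), by fun_prop, fun k => ?_, fun k => ⟨_, hnorm k⟩,
    fun k hk x => ?_⟩
  · rw [hderiv, mul_zero, hφ_jet]
    rcases eq_or_ne k n with rfl | hkn
    · simp [ht0.ne']
    · simp [hkn]
  · calc ‖iteratedDeriv k (fun y => (t ^ n)⁻¹ • φ (t * y)) x‖
        ≤ (t ^ n)⁻¹ * (t ^ k * C k) := hnorm k x
      _ ≤ (t ^ n)⁻¹ * (t ^ k * (ε * t)) := by gcongr; exact htC k (Finset.mem_range.2 hk)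
      _ = ε * ((t ^ n)⁻¹ * t ^ (k + 1)) := by ring
      _ ≤ ε * ((t ^ n)⁻¹ * t ^ n) := by gcongr; exact hk
      _ = ε := by rw [inv_mul_cancel₀ (by positivity), mul_one]

theorem exists_contDiff_iteratedDeriv_eq [CompleteSpace F] (x₀ : ℝ) (a : ℕ → F) :
    ∃ f : ℝ → F, ContDiff ℝ ∞ f ∧ ∀ k, iteratedDeriv k f x₀ = a k := by
  choose f hf hjet hbdd hsmall using fun n =>
    exists_contDiff_iteratedDeriv_eq_single_norm_le n (a n) (pow_pos one_half_pos n)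
  choose C hC using hbdd
  let v (k n : ℕ) : ℝ := if k < n then (1 / 2) ^ n else C n k
  have hv (k : ℕ) : Summable (v k) := by
    refine summable_geometric_two.congr_atTop ?_
    filter_upwards [eventually_gt_atTop k] with n hn
    exact (if_pos hn).symm
  have hfv (k n : ℕ) (x : ℝ) : ‖iteratedDeriv k (f n) x‖ ≤ v k n := by
    by_cases hkn : k < n
    · simpa only [v, if_pos hkn] using hsmall n k hkn x
    · simpa only [v, if_neg hkn] using hC n k x
  have hsmooth : ContDiff ℝ ∞ fun x => ∑' n, f n x :=
    contDiff_tsum hf (fun k _ => hv k) fun k n x _ =>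
      norm_iteratedFDeriv_eq_norm_iteratedDeriv.trans_le (hfv k n x)
  refine ⟨fun x => ∑' n, f n (x - x₀), hsmooth.comp (contDiff_id.sub contDiff_const), fun k => ?_⟩
  calc iteratedDeriv k (fun x => ∑' n, f n (x - x₀)) x₀
      = iteratedDeriv k (fun x => ∑' n, f n x) 0 := by
        simp only [iteratedDeriv_comp_sub_const k (fun x => ∑' n, f n x), sub_self]
    _ = ∑' n, iteratedDeriv k (f n) 0 :=
        iteratedDeriv_tsum_apply hf (fun k _ => hv k) (fun k n x _ => hfv k n x) le_top 0
    _ = ∑' n, (Pi.single n (a n) : ℕ → F) k := by simp only [hjet]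
    _ = a k := by
        rw [tsum_eq_single k fun n hn => Pi.single_eq_of_ne hn.symm _, Pi.single_eq_same]

end Borel

end Analysis

section QuotTensorQuot

variable {R : Type*} [CommRing R] (I J : Ideal R)

theorem sup_le_ker_algebraMap_quot_tensor_quot :
    I ⊔ J ≤ RingHom.ker (algebraMap R ((R ⧸ I) ⊗[R] (R ⧸ J))) := by
  refine sup_le (fun a ha => ?_) fun a ha => ?_
  · rw [RingHom.mem_ker, Algebra.TensorProduct.algebraMap_apply, Ideal.Quotient.algebraMap_eq,
      Ideal.Quotient.eq_zero_iff_mem.2 ha, TensorProduct.zero_tmul]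
  · rw [RingHom.mem_ker, Algebra.TensorProduct.algebraMap_apply', Ideal.Quotient.algebraMap_eq,
      Ideal.Quotient.eq_zero_iff_mem.2 ha, TensorProduct.tmul_zero]

/-- For ideals `I` and `J` of a commutative ring `R`, the isomorphism of `R`-algebras
`(R ⧸ I) ⊗[R] (R ⧸ J) ≃ R ⧸ (I ⊔ J)` induced by multiplication. -/
def quotTensorQuotEquivQuotSup : ((R ⧸ I) ⊗[R] (R ⧸ J)) ≃ₐ[R] R ⧸ (I ⊔ J) :=
  .ofAlgHom
    (Algebra.TensorProduct.productMap (Ideal.Quotient.factorₐ R le_sup_left)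
      (Ideal.Quotient.factorₐ R le_sup_right))
    (Ideal.Quotient.liftₐ _ (Algebra.ofId R _) (sup_le_ker_algebraMap_quot_tensor_quot I J))
    (Ideal.Quotient.algHom_ext _ (Subsingleton.elim _ _))
    (Algebra.TensorProduct.ext (Ideal.Quotient.algHom_ext _ (Subsingleton.elim _ _))
      (Ideal.Quotient.algHom_ext _ (Subsingleton.elim _ _)))

theorem quotTensorQuotEquivQuotSup_mk_tmul_mk (a b : R) :
    quotTensorQuotEquivQuotSup I J (Submodule.Quotient.mk a ⊗ₜ Submodule.Quotient.mk b) =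
      Submodule.Quotient.mk (a * b) :=
  rfl

end QuotTensorQuot

namespace SmoothR

theorem contDiff (f : SmoothR) : ContDiff ℝ (⊤ : ℕ∞) f :=
  f.contMDiff.contDiff

/-- The sequence of all derivatives of a smooth function at `x₀`, its infinite jet at `x₀`. -/
def jetAt (x₀ : ℝ) : SmoothR →ₗ[ℝ] (ℕ → ℝ) where
  toFun f n := iteratedDeriv n f x₀
  map_add' f g := funext fun n =>
    iteratedDeriv_add (contDiff_infty.1 f.contDiff n).contDiffAt
      (contDiff_infty.1 g.contDiff n).contDiffAt
  map_smul' r f := funext fun _ => iteratedDeriv_const_smul_field r f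

theorem jetAt_surjective (x₀ : ℝ) : Function.Surjective (jetAt x₀) := fun a =>
  have ⟨f, hf, hjet⟩ := exists_contDiff_iteratedDeriv_eq x₀ a
  ⟨⟨f, hf.contMDiff⟩, funext hjet⟩

theorem jetAt_eq_zero_of_eqOn_zero {f : SmoothR} {s : Set ℝ} {x₀ : ℝ} (hf : Set.EqOn f 0 s)
    (hx₀ : x₀ ∈ closure (interior s)) : jetAt x₀ f = 0 :=
  funext fun n => eqOn_iteratedDeriv_zero_closure_interior
    (f.contDiff.continuous_iteratedDeriv n (mod_cast le_top)) hf hx₀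

theorem mem_Jge_sup_Jle_of_jetAt_eq_zero {f : SmoothR} (hf : jetAt 0 f = 0) : f ∈ Jge ⊔ Jle := by
  have hflat (k : ℕ) : iteratedDeriv k f 0 = 0 := congrFun hf k
  have hf0 : f 0 = 0 := by simpa using hflat 0
  let g : SmoothR := ⟨(Set.Ici 0).indicator f,
    (contDiff_indicator f.contDiff fun k _ x hx => by
      obtain rfl : x = 0 := by simpa using hx
      exact hflat k).contMDiff⟩
  have hg : g ∈ Jle := fun x hx =>
    Set.indicator_apply_eq_zero.2 fun hx' => le_antisymm hx hx' ▸ hf0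
  have hfg : f - g ∈ Jge := fun x hx =>
    sub_eq_zero.2 (Set.indicator_of_mem hx f).symm
  exact sub_add_cancel f g ▸ Submodule.add_mem_sup hfg hg

theorem ker_jetAt_zero : (jetAt 0).ker = (Jge ⊔ Jle).restrictScalars ℝ := by
  refine le_antisymm (fun f => mem_Jge_sup_Jle_of_jetAt_eq_zero) fun f hf => ?_
  obtain ⟨u, hu, w, hw, rfl⟩ := Submodule.mem_sup.1 hf
  have hu' : jetAt 0 u = 0 := jetAt_eq_zero_of_eqOn_zero (s := Set.Ici 0) hu (by simp)
  have hw' : jetAt 0 w = 0 := jetAt_eq_zero_of_eqOn_zero (s := Set.Iic 0) hw (by simp)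
  rw [LinearMap.mem_ker, map_add, hu', hw', add_zero]

/-- The isomorphism `C^∞(ℝ) / (J_≥ + J_≤) ≃ ℝ^ℕ` induced by the jet at `0`. -/
def quotJgeSupJleEquiv : (SmoothR ⧸ (Jge ⊔ Jle)) ≃ₗ[ℝ] (ℕ → ℝ) :=
  (Submodule.Quotient.restrictScalarsEquiv ℝ (Jge ⊔ Jle)).symm ≪≫ₗ
    Submodule.quotEquivOfEq _ _ ker_jetAt_zero.symm ≪≫ₗ
    (jetAt 0).quotKerEquivOfSurjective (jetAt_surjective 0)

theorem quotJgeSupJleEquiv_mk (f : SmoothR) :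
    quotJgeSupJleEquiv (Submodule.Quotient.mk f) = jetAt 0 f :=
  rfl

end SmoothR

/-- The map `(C^∞(ℝ)/J_≥) ⊗_{C^∞(ℝ)} (C^∞(ℝ)/J_≤) → ℝ^ℕ`,
`[f] ⊗ [g] ↦ (n ↦ (f·g)⁽ⁿ⁾(0))`, is a well-defined `ℝ`-linear isomorphism;
in particular the tensor product is infinite dimensional over `ℝ`. -/
theorem tensorProduct_equiv_sequences :
    ∃ e : ((SmoothR ⧸ Jge) ⊗[SmoothR] (SmoothR ⧸ Jle)) ≃ₗ[ℝ] (ℕ → ℝ),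
      ∀ f g : SmoothR,
        e (Submodule.Quotient.mk f ⊗ₜ[SmoothR] Submodule.Quotient.mk g)
          = fun n : ℕ => iteratedDeriv n ((f * g : SmoothR) : ℝ → ℝ) 0 := by
  refine ⟨(quotTensorQuotEquivQuotSup Jge Jle).toLinearEquiv.restrictScalars ℝ ≪≫ₗ
    SmoothR.quotJgeSupJleEquiv, fun f g => ?_⟩
  calc SmoothR.quotJgeSupJleEquiv (quotTensorQuotEquivQuotSup Jge Jle
          (Submodule.Quotient.mk f ⊗ₜ[SmoothR] Submodule.Quotient.mk g))
      = SmoothR.quotJgeSupJleEquiv (Submodule.Quotient.mk (f * g)) := by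
        rw [quotTensorQuotEquivQuotSup_mk_tmul_mk]
    _ = SmoothR.jetAt 0 (f * g) := SmoothR.quotJgeSupJleEquiv_mk (f * g)
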